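/- Let P ⊆ ℤ^n_{≥0} be a polymatroid over [n] with rank function f satisfying f([n]) ≥ 2. Then for every i with 1 ≤ i < r_2(P) − 1, the coefficients of the exterior polynomial satisfy [y^{i+1}]X_P(y) − [y^i]X_P(y) ≤ ((f([n])+i−1)/(i+1)) · ([y^i]X_P(y) − [y^{i−1}]X_P(y)); in particular, if [y^i]X_P(y) − [y^{i−1}]X_P(y) ≤ 0, then [y^{i+1}]X_P(y) − [y^i]X_P(y) ≤ 0. -/

import Mathlib

open Finset Polynomial

/-- `f` is the rank function of a polymatroid over the ground set `[n]` (encoded as `Fin n`):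
normalization, monotonicity and submodularity. -/
def IsPolymatroidRank (n : ℕ) (f : Finset (Fin n) → ℕ) : Prop :=
  f ∅ = 0 ∧ (∀ I J : Finset (Fin n), I ⊆ J → f I ≤ f J) ∧
    ∀ I J : Finset (Fin n), f (I ∪ J) + f (I ∩ J) ≤ f I + f J

/-- The set of bases of the polymatroid `P ⊆ ℤ^n_{≥0}` with rank function `f`:
all nonnegative integer vectors `a` with `∑_{i ∈ I} a i ≤ f I` for every `I ⊆ [n]`
and `∑_{i ∈ [n]} a i = f [n]`.  (Every such vector has entries `≤ f [n]`, whence the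
bounding box used to produce a `Finset`.) -/
def polyBases (n : ℕ) (f : Finset (Fin n) → ℕ) : Finset (Fin n → ℤ) :=
  ((Finset.univ : Finset (Fin n → Fin (f Finset.univ + 1))).image
      (fun a i => ((a i : ℕ) : ℤ))).filter
    fun a => (∀ i, 0 ≤ a i) ∧ (∀ I : Finset (Fin n), ∑ i ∈ I, a i ≤ (f I : ℤ)) ∧
      ∑ i, a i = (f Finset.univ : ℤ)

/-- The externally active indices of a basis `a`: those `i` such that
`a + e_i - e_j ∉ P` for every `j < i`. -/
def extAct (n : ℕ) (f : Finset (Fin n) → ℕ) (a : Fin n → ℤ) : Finset (Fin n) :=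
  Finset.univ.filter fun i => ∀ j, j < i →
    (fun t => a t + (if t = i then 1 else 0) - (if t = j then 1 else 0)) ∉ polyBases n f

/-- The internally active indices of a basis `a`: those `i` such that
`a - e_i + e_j ∉ P` for every `j < i`. -/
def intAct (n : ℕ) (f : Finset (Fin n) → ℕ) (a : Fin n → ℤ) : Finset (Fin n) :=
  Finset.univ.filter fun i => ∀ j, j < i →
    (fun t => a t - (if t = i then 1 else 0) + (if t = j then 1 else 0)) ∉ polyBases n f

/-- The exterior polynomial `X_P(y) = ∑_{a ∈ P} y^(n - |Ext(a)|)`. -/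
noncomputable def exteriorPoly (n : ℕ) (f : Finset (Fin n) → ℕ) : Polynomial ℤ :=
  ∑ a ∈ polyBases n f, X ^ (n - (extAct n f a).card)

/-- The interior polynomial `I_P(x) = ∑_{a ∈ P} x^(n - |Int(a)|)`. -/
noncomputable def interiorPoly (n : ℕ) (f : Finset (Fin n) → ℕ) : Polynomial ℤ :=
  ∑ a ∈ polyBases n f, X ^ (n - (intAct n f a).card)

/-- `r_k(P) = min { n - |F| : F ⊆ [n], f F ≤ f [n] - k }` (junk value `0` if no such `F`). -/
noncomputable def rk (n : ℕ) (f : Finset (Fin n) → ℕ) (k : ℕ) : ℕ :=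
  sInf {m | ∃ F : Finset (Fin n), (f F : ℤ) ≤ (f Finset.univ : ℤ) - k ∧ m = n - F.card}

/-- `r'_k(P) = min { |F| : F ⊆ [n], ∑_{i ∈ F} f {i} - f F ≥ k }` (junk value `0` if no such `F`). -/
noncomputable def rk' (n : ℕ) (f : Finset (Fin n) → ℕ) (k : ℕ) : ℕ :=
  sInf {m | ∃ F : Finset (Fin n), (k : ℤ) ≤ (∑ i ∈ F, (f {i} : ℤ)) - (f F : ℤ) ∧ m = F.card}

/-- `H_j(P)`: the flats `H` (i.e. `f (H ∪ {e}) > f H` for all `e ∉ H`) with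
`f H = f [n] - 1` and `n - |H| = j`. -/
def Hset (n : ℕ) (f : Finset (Fin n) → ℕ) (j : ℕ) : Finset (Finset (Fin n)) :=
  Finset.univ.filter fun H =>
    (∀ e, e ∉ H → f H < f (insert e H)) ∧ (f H : ℤ) = (f Finset.univ : ℤ) - 1 ∧
      n - H.card = j

/-- `C_j(P)`: the sets `C` with `|C| = j`, `∑_{i ∈ C} f {i} - f C = 1` and
`∑_{i ∈ C \ {j'}} f {i} = f (C \ {j'})` for every `j' ∈ C`. -/
def Cset (n : ℕ) (f : Finset (Fin n) → ℕ) (j : ℕ) : Finset (Finset (Fin n)) :=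
  Finset.univ.filter fun C => C.card = j ∧
    (∑ i ∈ C, (f {i} : ℤ)) - (f C : ℤ) = 1 ∧
    ∀ j' ∈ C, (∑ i ∈ C.erase j', (f {i} : ℤ)) = (f (C.erase j') : ℤ)

/-- The dual rank function `f*(I) = f([n] \ I) - f([n]) + ∑_{i ∈ I} f {i}`
(the subtraction is exact for a polymatroid rank function). -/
def fdual (n : ℕ) (f : Finset (Fin n) → ℕ) : Finset (Fin n) → ℕ :=
  fun I => f (Finset.univ \ I) + (∑ i ∈ I, f {i}) - f Finset.univ

section helpers

variable {n : ℕ} {f : Finset (Fin n) → ℕ}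

/-- Independent integer vectors. -/
def Indep (n : ℕ) (f : Finset (Fin n) → ℕ) (a : Fin n → ℤ) : Prop :=
  (∀ i, 0 ≤ a i) ∧ ∀ I : Finset (Fin n), ∑ i ∈ I, a i ≤ (f I : ℤ)

lemma mem_bases (hf : IsPolymatroidRank n f) (a : Fin n → ℤ) :
    a ∈ polyBases n f ↔ Indep n f a ∧ ∑ i, a i = (f Finset.univ : ℤ) := by
  unfold polyBases Indep
  rw [Finset.mem_filter]
  constructor
  · rintro ⟨_, h1, h2, h3⟩
    exact ⟨⟨h1, h2⟩, h3⟩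
  · rintro ⟨⟨h1, h2⟩, h3⟩
    refine ⟨?_, h1, h2, h3⟩
    rw [Finset.mem_image]
    have hle : ∀ i, a i ≤ (f Finset.univ : ℤ) := by
      intro i
      have := h2 {i}
      have h4 := hf.2.1 {i} Finset.univ (Finset.subset_univ _)
      simp at this
      have h5 : (f {i} : ℤ) ≤ (f Finset.univ : ℤ) := by exact_mod_cast h4
      linarith
    refine ⟨fun i => ⟨(a i).toNat, ?_⟩, Finset.mem_univ _, ?_⟩
    · have := hle i
      have := h1 i
      omega
    · funext i
      have := h1 i
      simp [this]

lemma sum_add_single (a : Fin n → ℤ) (i : Fin n) (I : Finset (Fin n)) :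
    ∑ t ∈ I, (a t + (if t = i then 1 else 0)) = ∑ t ∈ I, a t + (if i ∈ I then 1 else 0) := by
  rw [Finset.sum_add_distrib, Finset.sum_ite_eq']

lemma sum_exch (a : Fin n → ℤ) (i j : Fin n) (I : Finset (Fin n)) :
    ∑ t ∈ I, (a t + (if t = i then 1 else 0) - (if t = j then 1 else 0)) =
      ∑ t ∈ I, a t + (if i ∈ I then 1 else 0) - (if j ∈ I then 1 else 0) := by
  rw [Finset.sum_sub_distrib, Finset.sum_add_distrib, Finset.sum_ite_eq', Finset.sum_ite_eq']

lemma tight_both (hf : IsPolymatroidRank n f) {a : Fin n → ℤ} (ha : Indep n f a)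
    {I J : Finset (Fin n)} (hI : ∑ t ∈ I, a t = f I) (hJ : ∑ t ∈ J, a t = f J) :
    ∑ t ∈ I ∪ J, a t = f (I ∪ J) ∧ ∑ t ∈ I ∩ J, a t = f (I ∩ J) := by
  have h1 := Finset.sum_union_inter (s₁ := I) (s₂ := J) (f := a)
  have h2 := ha.2 (I ∪ J)
  have h3 := ha.2 (I ∩ J)
  have h4 := hf.2.2 I J
  have h5 : (f (I ∪ J) : ℤ) + f (I ∩ J) ≤ f I + f J := by exact_mod_cast h4
  constructor <;> linarith

lemma exchange (hf : IsPolymatroidRank n f) {a b : Fin n → ℤ} (ha : a ∈ polyBases n f)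
    (hb : b ∈ polyBases n f) {i : Fin n} (hi : a i < b i) :
    ∃ j, b j < a j ∧
      (fun t => a t + (if t = i then 1 else 0) - (if t = j then 1 else 0)) ∈ polyBases n f := by
  classical
  rw [mem_bases hf] at ha hb
  -- minimal tight set containing i
  obtain ⟨U, hU, hmin⟩ := Finset.exists_min_image
    (Finset.univ.filter fun I : Finset (Fin n) => i ∈ I ∧ ∑ t ∈ I, a t = f I)
    (fun I => I.card) ⟨Finset.univ, by simp [ha.2]⟩
  simp only [Finset.mem_filter, Finset.mem_univ, true_and] at hU hmin
  have hsub : ∀ I : Finset (Fin n), i ∈ I → ∑ t ∈ I, a t = f I → U ⊆ I := by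
    intro I hiI hI
    have h1 := (tight_both hf ha.1 hU.2 hI).2
    have h2 := hmin (U ∩ I) ⟨Finset.mem_inter.2 ⟨hU.1, hiI⟩, h1⟩
    have h3 := Finset.eq_of_subset_of_card_le (Finset.inter_subset_left (s₁ := U) (s₂ := I)) h2
    exact Finset.inter_eq_left.1 h3
  obtain ⟨j, hjU, hj⟩ : ∃ j ∈ U, b j < a j := by
    by_contra! hcon
    have := Finset.sum_lt_sum hcon ⟨i, hU.1, hi⟩
    have := hb.1.2 U
    linarith [hU.2]
  refine ⟨j, hj, ?_⟩
  have hij : j ≠ i := by rintro rfl; omega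
  rw [mem_bases hf]
  refine ⟨⟨?_, ?_⟩, ?_⟩
  · intro t
    have h1 := ha.1.1 t
    have h2 := hb.1.1 t
    dsimp only
    split_ifs with h3 h4 h4
    · omega
    · omega
    · subst h4; omega
    · omega
  · intro I
    rw [sum_exch]
    have h1 := ha.1.2 I
    split_ifs with h2 h3 h3
    · omega
    · have h4 : ∑ t ∈ I, a t ≠ f I := fun h => h3 (hsub I h2 h hjU)
      omega
    · omega
    · omega
  · rw [sum_exch]
    simp [ha.2]

lemma exists_tight (hf : IsPolymatroidRank n f) (T : Finset (Fin n)) :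
    ∃ a : Fin n → ℤ, Indep n f a ∧ (∀ i, i ∉ T → a i = 0) ∧ ∑ t ∈ T, a t = f T := by
  classical
  have hbdd : ∀ m : ℕ, (∃ a : Fin n → ℤ, Indep n f a ∧ (∀ i, i ∉ T → a i = 0) ∧
      ∑ t ∈ T, a t = m) → m ≤ f T := by
    rintro m ⟨a, ha, _, h⟩
    have := ha.2 T
    omega
  have h0 : ∃ m : ℕ, ∃ a : Fin n → ℤ, Indep n f a ∧ (∀ i, i ∉ T → a i = 0) ∧
      ∑ t ∈ T, a t = m :=
    ⟨0, fun _ => 0, ⟨fun _ => le_refl _, fun I => by simp⟩, fun _ _ => rfl, by simp⟩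
  obtain ⟨m, hm, hmax⟩ : ∃ m : ℕ, (∃ a : Fin n → ℤ, Indep n f a ∧ (∀ i, i ∉ T → a i = 0) ∧
      ∑ t ∈ T, a t = m) ∧ ∀ m' : ℕ, (∃ a : Fin n → ℤ, Indep n f a ∧ (∀ i, i ∉ T → a i = 0) ∧
      ∑ t ∈ T, a t = m') → m' ≤ m := by
    obtain ⟨m0, hm0⟩ := h0
    refine ⟨Nat.findGreatest (fun m : ℕ => ∃ a : Fin n → ℤ, Indep n f a ∧
      (∀ i, i ∉ T → a i = 0) ∧ ∑ t ∈ T, a t = m) (f T), ?_, ?_⟩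
    · exact Nat.findGreatest_spec (P := fun m : ℕ => ∃ a : Fin n → ℤ, Indep n f a ∧
      (∀ i, i ∉ T → a i = 0) ∧ ∑ t ∈ T, a t = m) (hbdd _ hm0) hm0
    · intro m' hm'
      exact Nat.le_findGreatest (hbdd _ hm') hm'
  obtain ⟨a, ha, hsupp, hsum⟩ := hm
  refine ⟨a, ha, hsupp, ?_⟩
  have htight : ∀ i ∈ T, ∃ I : Finset (Fin n), i ∈ I ∧ ∑ t ∈ I, a t = f I := by
    intro i hi
    by_contra! hcon
    have := hmax (m + 1) ⟨fun t => a t + (if t = i then 1 else 0), ⟨?_, ?_⟩, ?_, ?_⟩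
    · omega
    · intro t
      have := ha.1 t
      dsimp only
      split_ifs <;> omega
    · intro I
      rw [sum_add_single]
      have h1 := ha.2 I
      split_ifs with h2
      · have := hcon I h2
        omega
      · omega
    · intro t ht
      have h1 : t ≠ i := by rintro rfl; exact ht hi
      simp [h1, hsupp t ht]
    · rw [sum_add_single, hsum]
      simp [hi]
  have hcover : ∀ S : Finset (Fin n), S ⊆ T →
      ∃ U : Finset (Fin n), S ⊆ U ∧ ∑ t ∈ U, a t = f U := by
    intro S
    induction S using Finset.induction_on with
    | empty => intro _; exact ⟨∅, by simp, by simp [hf.1]⟩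
    | insert e S _ ih =>
      intro hS
      obtain ⟨U, hU, hU2⟩ := ih (fun x hx => hS (Finset.mem_insert_of_mem hx))
      obtain ⟨I, hI, hI2⟩ := htight e (hS (Finset.mem_insert_self _ _))
      refine ⟨I ∪ U, ?_, (tight_both hf ha hI2 hU2).1⟩
      intro x hx
      rcases Finset.mem_insert.1 hx with rfl | hx
      · exact Finset.mem_union_left _ hI
      · exact Finset.mem_union_right _ (hU hx)
  obtain ⟨U, hTU, hU⟩ := hcover T (Finset.Subset.refl _)
  have h1 : ∑ t ∈ T, a t = ∑ t ∈ U, a t :=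
    Finset.sum_subset hTU (fun x _ hx => hsupp x hx)
  have h2 := hf.2.1 T U hTU
  have h3 := ha.2 T
  have h4 : (f T : ℤ) ≤ f U := by exact_mod_cast h2
  linarith

/-- `c` dominates a basis. -/
def Spans (n : ℕ) (f : Finset (Fin n) → ℕ) (c : Fin n → ℕ) : Prop :=
  ∃ a ∈ polyBases n f, ∀ i, a i ≤ (c i : ℤ)

lemma sum_eq_of_supp {a : Fin n → ℤ} {T : Finset (Fin n)} (h : ∀ i, i ∉ T → a i = 0) :
    ∑ i, a i = ∑ i ∈ T, a i :=
  (Finset.sum_subset (Finset.subset_univ T) (fun x _ hx => h x hx)).symm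

lemma indep_le (hf : IsPolymatroidRank n f) {a : Fin n → ℤ} (ha : Indep n f a) (i : Fin n) :
    a i ≤ (f Finset.univ : ℤ) := by
  have := ha.2 {i}
  have h4 := hf.2.1 {i} Finset.univ (Finset.subset_univ _)
  simp at this
  have h5 : (f {i} : ℤ) ≤ (f Finset.univ : ℤ) := by exact_mod_cast h4
  linarith

lemma spans_of_top (hf : IsPolymatroidRank n f) {c : Fin n → ℕ} {T : Finset (Fin n)}
    (hT : ∀ i ∈ T, c i = f Finset.univ + 1) (hfT : f T = f Finset.univ) : Spans n f c := by
  obtain ⟨a, ha, hs, hsum⟩ := exists_tight hf T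
  refine ⟨a, (mem_bases hf a).2 ⟨ha, ?_⟩, ?_⟩
  · rw [sum_eq_of_supp hs, hsum, hfT]
  · intro i
    by_cases hi : i ∈ T
    · have := indep_le hf ha i
      rw [hT i hi]; push_cast; linarith
    · rw [hs i hi]; positivity

lemma spans_of_top_insert (hf : IsPolymatroidRank n f) {c : Fin n → ℕ} {T : Finset (Fin n)}
    (hT : ∀ i ∈ T, c i = f Finset.univ + 1) (hfT : f T + 1 = f Finset.univ) {e : Fin n}
    (he : c e ≠ 0) (heT : f (insert e T) = f Finset.univ) : Spans n f c := by
  classical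
  obtain ⟨a, ha, hs, hsum⟩ := exists_tight hf T
  have heT' : e ∉ T := by
    intro h
    rw [Finset.insert_eq_of_mem h] at heT
    omega
  refine ⟨fun t => a t + (if t = e then 1 else 0), (mem_bases hf _).2 ⟨⟨?_, ?_⟩, ?_⟩, ?_⟩
  · intro t
    have := ha.1 t
    dsimp only
    split_ifs <;> omega
  · intro I
    rw [sum_add_single]
    have h1 := ha.2 I
    split_ifs with h2
    · by_contra hcon
      have h3 : ∑ t ∈ I, a t = f I := by omega
      have h4 := (tight_both hf ha hsum h3).1
      have h5 : ∑ t ∈ T ∪ I, a t = ∑ t ∈ T, a t :=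
        (Finset.sum_subset Finset.subset_union_left (fun x _ hx => hs x hx)).symm
      have h6 : f (insert e T) ≤ f (T ∪ I) := by
        apply hf.2.1
        intro x hx
        rcases Finset.mem_insert.1 hx with rfl | hx
        · exact Finset.mem_union_right _ h2
        · exact Finset.mem_union_left _ hx
      omega
    · omega
  · rw [sum_add_single, sum_eq_of_supp hs, hsum]
    simp
    exact_mod_cast hfT
  · intro i
    dsimp only
    by_cases hi : i = e
    · subst hi
      rw [hs i heT']
      simp
      omega
    · simp only [hi, if_false, add_zero]
      by_cases hi : i ∈ T
      · have := indep_le hf ha i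
        rw [hT i hi]; push_cast; linarith
      · rw [hs i hi]; positivity

/-- Hyperplanes. -/
def IsHyp (n : ℕ) (f : Finset (Fin n) → ℕ) (H : Finset (Fin n)) : Prop :=
  (∀ e, e ∉ H → f H < f (insert e H)) ∧ f H + 1 = f Finset.univ

lemma not_spans_of_hyp (hf : IsPolymatroidRank n f) {c : Fin n → ℕ} {H : Finset (Fin n)}
    (hH : IsHyp n f H) (hc : ∀ i, i ∉ H → c i = 0) : ¬ Spans n f c := by
  rintro ⟨a, ha, hac⟩
  rw [mem_bases hf] at ha
  have hs : ∀ i, i ∉ H → a i = 0 := by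
    intro i hi
    have h1 := hac i
    have h2 := ha.1.1 i
    rw [hc i hi] at h1
    omega
  have h1 := ha.1.2 H
  have h2 := ha.2
  rw [sum_eq_of_supp hs] at h2
  have := hH.2
  omega

lemma exists_hyp (hf : IsPolymatroidRank n f) {c : Fin n → ℕ} {T : Finset (Fin n)}
    (hT : ∀ i ∈ T, c i = f Finset.univ + 1) (hfT : f Finset.univ ≤ f T + 1)
    (hns : ¬ Spans n f c) : ∃ H, IsHyp n f H ∧ ∀ i, i ∉ H → c i = 0 := by
  classical
  have hTu := hf.2.1 T Finset.univ (Finset.subset_univ _)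
  have hne : f T ≠ f Finset.univ := fun h => hns (spans_of_top hf hT h)
  have hT1 : f T + 1 = f Finset.univ := by omega
  obtain ⟨H, hH, hmax⟩ := Finset.exists_max_image
    (Finset.univ.filter fun I : Finset (Fin n) => T ⊆ I ∧ f I + 1 = f Finset.univ)
    (fun I => I.card) ⟨T, by simp [hT1]⟩
  simp only [Finset.mem_filter, Finset.mem_univ, true_and] at hH hmax
  have hflat : ∀ e, e ∉ H → f H < f (insert e H) := by
    intro e he
    have h1 := hf.2.1 H (insert e H) (Finset.subset_insert _ _)
    rcases h1.lt_or_eq with h | h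
    · exact h
    · exfalso
      have := hmax (insert e H) ⟨hH.1.trans (Finset.subset_insert _ _), by omega⟩
      rw [Finset.card_insert_of_notMem he] at this
      omega
  refine ⟨H, ⟨hflat, hH.2⟩, ?_⟩
  intro e he
  by_contra hce
  have h1 := hflat e he
  have h2 := hf.2.1 (insert e T) Finset.univ (Finset.subset_univ _)
  have h3 := hf.2.2 (insert e T) H
  have h4 : insert e T ∪ H = insert e H := by
    rw [Finset.insert_union, Finset.union_eq_right.2 hH.1]
  have h5 : T ⊆ insert e T ∩ H :=
    Finset.subset_inter (Finset.subset_insert _ _) hH.1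
  have h6 := hf.2.1 _ _ h5
  rw [h4] at h3
  have := hH.2
  exact hns (spans_of_top_insert hf hT hT1 hce (by omega))

lemma hyp_subset (hf : IsPolymatroidRank n f) {T H K : Finset (Fin n)}
    (hfT : f Finset.univ ≤ f T + 1) (hH : IsHyp n f H) (hK : IsHyp n f K)
    (hTH : T ⊆ H) (hTK : T ⊆ K) : K ⊆ H := by
  intro e he
  by_contra heH
  have h1 := hH.1 e heH
  have h2 := hf.2.2 H K
  have h3 := hf.2.1 _ _ (Finset.subset_inter hTH hTK)
  have h4 : insert e H ⊆ H ∪ K := by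
    intro x hx
    rcases Finset.mem_insert.1 hx with rfl | hx
    · exact Finset.mem_union_right _ he
    · exact Finset.mem_union_left _ hx
  have h5 := hf.2.1 _ _ h4
  have := hH.2
  have := hK.2
  omega

lemma mem_extAct (a : Fin n → ℤ) (i : Fin n) : i ∈ extAct n f a ↔ ∀ j, j < i →
    (fun t => a t + (if t = i then 1 else 0) - (if t = j then 1 else 0)) ∉ polyBases n f := by
  simp [extAct]

/-- `c` is in the cone of the basis `a`. -/
def InCone (n : ℕ) (f : Finset (Fin n) → ℕ) (a : Fin n → ℤ) (c : Fin n → ℕ) : Prop :=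
  ∀ i, a i ≤ (c i : ℤ) ∧ (i ∉ extAct n f a → a i = (c i : ℤ))

lemma exists_cone {c : Fin n → ℕ} (hc : Spans n f c) :
    ∃ a ∈ polyBases n f, InCone n f a c := by
  classical
  obtain ⟨a0, ha0, h0⟩ := hc
  obtain ⟨a, ha, hmax⟩ := Finset.exists_max_image
    ((polyBases n f).filter fun a => ∀ i, a i ≤ (c i : ℤ))
    (fun a => ∑ t, (t.val : ℤ) * a t) ⟨a0, by simp [ha0, h0]⟩
  simp only [Finset.mem_filter] at ha hmax
  refine ⟨a, ha.1, fun i => ⟨ha.2 i, fun hi => ?_⟩⟩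
  by_contra hne
  have hlt : a i < c i := lt_of_le_of_ne (ha.2 i) hne
  apply hne
  exfalso
  rw [mem_extAct] at hi
  push Not at hi
  obtain ⟨j, hj, hb⟩ := hi
  have := hmax _ ⟨hb, ?_⟩
  · have h2 : ∑ t : Fin n, (t.val : ℤ) * (a t + (if t = i then 1 else 0) -
        (if t = j then 1 else 0)) = ∑ t : Fin n, (t.val : ℤ) * a t + i.val - j.val := by
      simp only [mul_sub, mul_add, Finset.sum_sub_distrib, Finset.sum_add_distrib]
      simp
    rw [h2] at this
    have h3 : j.val < i.val := hj
    omega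
  · intro t
    have := ha.2 t
    by_cases h1 : t = i
    · subst h1
      split_ifs <;> omega
    · split_ifs <;> omega

lemma cone_aux (hf : IsPolymatroidRank n f) {a b : Fin n → ℤ} {c : Fin n → ℕ}
    (ha : a ∈ polyBases n f) (hb : b ∈ polyBases n f)
    (hac : InCone n f a c) (hbc : InCone n f b c) {i : Fin n}
    (hmax : ∀ j, a j ≠ b j → j ≤ i) : ¬ a i < b i := by
  intro hi
  obtain ⟨j, hj, hm⟩ := exchange hf ha hb hi
  have h1 : j ≤ i := hmax j (by omega)
  have h2 : j ≠ i := by rintro rfl; omega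
  have h3 : i ∈ extAct n f a := by
    by_contra h
    have h4 := (hac i).2 h
    have h5 := (hbc i).1
    omega
  exact (mem_extAct a i).1 h3 j (lt_of_le_of_ne h1 h2) hm

lemma cone_unique (hf : IsPolymatroidRank n f) {a b : Fin n → ℤ} {c : Fin n → ℕ}
    (ha : a ∈ polyBases n f) (hb : b ∈ polyBases n f)
    (hac : InCone n f a c) (hbc : InCone n f b c) : a = b := by
  classical
  by_contra hne
  obtain ⟨i0, hi0⟩ := Function.ne_iff.1 hne
  obtain ⟨i, hi, hmax⟩ := Finset.exists_max_image
    (Finset.univ.filter fun i => a i ≠ b i) id ⟨i0, by simpa using hi0⟩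
  simp only [Finset.mem_filter, Finset.mem_univ, true_and, id] at hi hmax
  rcases lt_or_gt_of_ne hi with h | h
  · exact cone_aux hf ha hb hac hbc hmax h
  · exact cone_aux hf hb ha hbc hac (fun j hj => hmax j hj.symm) h

/-- weight of one coordinate -/
noncomputable def wt (D k : ℕ) : ℤ[X] := (1 - X) ^ k * (if k = D then 1 else X)

lemma sum_wt (D m : ℕ) (hm : m ≤ D) : ∑ k ∈ Finset.Icc m D, wt D k = (1 - X) ^ m := by
  obtain ⟨t, ht⟩ : ∃ t, D = m + t := ⟨D - m, by omega⟩
  induction t generalizing m with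
  | zero =>
    have : m = D := by omega
    subst this
    simp [wt]
  | succ t ih =>
    rw [← Finset.add_sum_Ioc_eq_sum_Icc (by omega)]
    have : Finset.Ioc m D = Finset.Icc (m + 1) D := by ext x; simp [Nat.succ_le_iff]
    rw [this, ih (m + 1) (by omega) (by omega), wt, if_neg (by omega)]
    ring

/-- The box. -/
def vbox (n D : ℕ) : Finset (Fin n → ℕ) := Fintype.piFinset fun _ => Finset.Icc 0 D

lemma sum_hyp (D : ℕ) (hD : 0 < D) (H : Finset (Fin n)) :
    ∑ c ∈ Fintype.piFinset (fun i => if i ∈ H then Finset.Icc 0 D else {0}), ∏ i, wt D (c i)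
      = X ^ (n - H.card) := by
  classical
  rw [← Finset.prod_univ_sum]
  have : ∀ i : Fin n, ∑ k ∈ (if i ∈ H then Finset.Icc 0 D else {0}), wt D k =
      if i ∈ H then 1 else X := by
    intro i
    split_ifs
    · rw [sum_wt _ _ (by omega)]; simp
    · simp [wt, hD.ne]
  rw [Finset.prod_congr rfl (fun i _ => this i), Finset.prod_ite]
  simp [Finset.filter_not, Finset.card_sdiff]

lemma sum_box (D : ℕ) : ∑ c ∈ vbox n D, ∏ i, wt D (c i) = 1 := by
  unfold vbox
  rw [← Finset.prod_univ_sum]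
  simp [sum_wt]

lemma sum_cone (hf : IsPolymatroidRank n f) {a : Fin n → ℤ} (ha : a ∈ polyBases n f)
    [DecidablePred (InCone n f a)] :
    ∑ c ∈ (vbox n (f Finset.univ + 1)).filter (InCone n f a), ∏ i, wt (f Finset.univ + 1) (c i)
      = (1 - X) ^ (f Finset.univ) * X ^ (n - (extAct n f a).card) := by
  classical
  have ha' := (mem_bases hf a).1 ha
  have hset : (vbox n (f Finset.univ + 1)).filter (InCone n f a) =
      Fintype.piFinset (fun i => if i ∈ extAct n f a then
        Finset.Icc (a i).toNat (f Finset.univ + 1) else {(a i).toNat}) := by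
    ext c
    simp only [vbox, Finset.mem_filter, Fintype.mem_piFinset, InCone]
    constructor
    · rintro ⟨h1, h2⟩ i
      have h3 := h2 i
      have h4 := h1 i
      rw [Finset.mem_Icc] at h4
      split_ifs with h5
      · rw [Finset.mem_Icc]; omega
      · have := h3.2 h5
        rw [Finset.mem_singleton]; omega
    · intro h
      have key : ∀ i, c i ∈ Finset.Icc 0 (f Finset.univ + 1) ∧
          (a i ≤ (c i : ℤ) ∧ (i ∉ extAct n f a → a i = (c i : ℤ))) := by
        intro i
        have h1 := h i
        have h2 := indep_le hf ha'.1 i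
        have h3 := ha'.1.1 i
        split_ifs at h1 with h5
        · rw [Finset.mem_Icc] at h1 ⊢
          exact ⟨by omega, by omega, fun h => absurd h5 h⟩
        · rw [Finset.mem_singleton] at h1
          rw [Finset.mem_Icc]
          exact ⟨by omega, by omega, fun _ => by omega⟩
      exact ⟨fun i => (key i).1, fun i => (key i).2⟩
  rw [hset, ← Finset.prod_univ_sum]
  have : ∀ i : Fin n, ∑ k ∈ (if i ∈ extAct n f a then
        Finset.Icc (a i).toNat (f Finset.univ + 1) else {(a i).toNat}), wt (f Finset.univ + 1) k =
      (1 - X) ^ (a i).toNat * if i ∈ extAct n f a then 1 else X := by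
    intro i
    have h2 := indep_le hf ha'.1 i
    split_ifs
    · rw [sum_wt _ _ (by omega)]; simp
    · rw [Finset.sum_singleton, wt, if_neg (by omega)]
  rw [Finset.prod_congr rfl (fun i _ => this i), Finset.prod_mul_distrib, Finset.prod_pow_eq_pow_sum,
    Finset.prod_ite]
  have hs : ∑ i, (a i).toNat = f Finset.univ := by
    zify
    rw [← ha'.2]
    apply Finset.sum_congr rfl
    intro i _
    exact Int.toNat_of_nonneg (ha'.1.1 i)
  rw [hs]
  simp [Finset.filter_not, Finset.card_sdiff]

open Classical in
lemma main_identity (hf : IsPolymatroidRank n f) :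
    (1 - X) ^ (f Finset.univ) * exteriorPoly n f =
      ∑ c ∈ (vbox n (f Finset.univ + 1)).filter (Spans n f), ∏ i, wt (f Finset.univ + 1) (c i) := by
  unfold exteriorPoly
  rw [Finset.mul_sum]
  rw [Finset.sum_congr rfl (fun a ha => (sum_cone hf ha).symm)]
  rw [← Finset.sum_biUnion]
  · congr 1
    ext c
    simp only [Finset.mem_biUnion, Finset.mem_filter]
    constructor
    · rintro ⟨a, ha, hc, h⟩
      exact ⟨hc, a, ha, fun i => (h i).1⟩
    · rintro ⟨hc, h⟩
      obtain ⟨a, ha, h⟩ := exists_cone h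
      exact ⟨a, ha, hc, h⟩
  · intro a ha b hb hab
    rw [Function.onFun, Finset.disjoint_left]
    intro c h1 h2
    rw [Finset.mem_filter] at h1 h2
    exact hab (cone_unique hf ha hb h1.2 h2.2)

open Classical in
lemma dvd_identity (hf : IsPolymatroidRank n f) :
    X ^ (rk n f 2) ∣ (1 - X) ^ (f Finset.univ) * exteriorPoly n f -
      (1 - ∑ H ∈ Finset.univ.filter (IsHyp n f), X ^ (n - H.card)) := by
  set D := f Finset.univ + 1 with hD
  have hbox : ∀ H : Finset (Fin n), Fintype.piFinset
      (fun i => if i ∈ H then Finset.Icc 0 D else {0}) =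
      (vbox n D).filter (fun c => ∀ i, i ∉ H → c i = 0) := by
    intro H
    ext c
    simp only [vbox, Finset.mem_filter, Fintype.mem_piFinset]
    constructor
    · intro h
      refine ⟨fun i => ?_, fun i hi => ?_⟩
      · have := h i
        split_ifs at this
        · exact this
        · simp at this; simp [this]
      · have := h i
        simpa [hi] using this
    · rintro ⟨h1, h2⟩ i
      split_ifs with h
      · exact h1 i
      · simp [h2 i h]
  rw [main_identity hf, ← sum_box (n := n) D,
    Finset.sum_congr rfl (fun H _ => (sum_hyp D (by omega) H).symm)]
  generalize h𝓗 : Finset.univ.filter (IsHyp n f) = 𝓗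
  have hmem : ∀ H, H ∈ 𝓗 ↔ IsHyp n f H := by
    intro H
    rw [← h𝓗]; simp
  simp_rw [hbox, Finset.sum_filter]
  rw [Finset.sum_comm, ← Finset.sum_sub_distrib, ← Finset.sum_sub_distrib]
  apply Finset.dvd_sum
  intro c hc
  set T := Finset.univ.filter fun i => c i = D with hTdef
  have hT : ∀ i ∈ T, c i = f Finset.univ + 1 := by
    intro i hi
    simpa [hTdef] using hi
  by_cases hfT : f Finset.univ ≤ f T + 1
  · -- exact cancellation
    have hTH : ∀ H : Finset (Fin n), (∀ i, i ∉ H → c i = 0) → T ⊆ H := by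
      intro H h i hi
      by_contra h'
      have := h i h'
      have := hT i hi
      omega
    by_cases hs : Spans n f c
    · rw [if_pos hs, Finset.sum_eq_zero]
      · simp [hD]
      · intro H hH
        rw [if_neg]
        intro h
        exact not_spans_of_hyp hf ((hmem H).1 hH) h hs
    · obtain ⟨H, hH, hcH⟩ := exists_hyp hf hT hfT hs
      rw [if_neg hs, Finset.sum_eq_single H]
      · rw [if_pos hcH]; simp
      · intro K hK hKH
        rw [if_neg]
        intro h
        have hK := (hmem K).1 hK
        exact hKH (Finset.Subset.antisymm
          (hyp_subset hf hfT hH hK (hTH _ hcH) (hTH _ h))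
          (hyp_subset hf hfT hK hH (hTH _ h) (hTH _ hcH)))
      · intro h
        exact absurd ((hmem H).2 hH) h
  · have hdvd : X ^ (rk n f 2) ∣ ∏ i, wt D (c i) := by
      have hle : rk n f 2 ≤ n - T.card := by
        apply Nat.sInf_le
        exact ⟨T, by push_cast; omega, rfl⟩
      have : ∏ i, wt D (c i) = (∏ i, (1 - X) ^ (c i)) * X ^ (n - T.card) := by
        unfold wt
        rw [Finset.prod_mul_distrib, Finset.prod_ite]
        simp [Finset.filter_not, Finset.card_sdiff, hTdef]
      rw [this]
      exact Dvd.dvd.mul_left (pow_dvd_pow _ hle) _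
    apply dvd_sub
    · split_ifs
      · exact hdvd
      · exact dvd_zero _
    · apply dvd_sub hdvd
      apply Finset.dvd_sum
      intro H _
      split_ifs
      · exact hdvd
      · exact dvd_zero _

lemma coeff_G (hf : IsPolymatroidRank n f) (j : ℕ) (h1 : 1 ≤ j) (hj : j < rk n f 2) :
    ((1 - X) ^ (f Finset.univ) * exteriorPoly n f).coeff j ≤ 0 := by
  classical
  obtain ⟨Q, hQ⟩ := dvd_identity hf
  have : (1 - X) ^ (f Finset.univ) * exteriorPoly n f =
      (1 - ∑ H ∈ Finset.univ.filter (IsHyp n f), X ^ (n - H.card)) + X ^ (rk n f 2) * Q := by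
    rw [← hQ]; ring
  rw [this, Polynomial.coeff_add, Polynomial.coeff_sub, Polynomial.coeff_one,
    Polynomial.coeff_X_pow_mul', if_neg (by omega), if_neg (by omega), Polynomial.finsetSum_coeff]
  have : 0 ≤ ∑ H ∈ Finset.univ.filter (IsHyp n f), (X ^ (n - H.card) : ℤ[X]).coeff j := by
    apply Finset.sum_nonneg
    intro H _
    rw [Polynomial.coeff_X_pow]
    split_ifs <;> simp
  linarith

lemma coeff_diff (E : ℤ[X]) (m k : ℕ) :
    ((1 - X) * E).coeff k =
      ∑ j ∈ Finset.range (k + 1), (((m + (k - j)).choose m : ℕ) : ℤ) *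
        ((1 - X) ^ (m + 2) * E).coeff j := by
  have h : (((1 - X) * E : ℤ[X]) : PowerSeries ℤ) =
      (((1 - X) ^ (m + 2) * E : ℤ[X]) : PowerSeries ℤ) *
        (PowerSeries.invOneSubPow ℤ (m + 1)).val := by
    have h2 := (PowerSeries.invOneSubPow ℤ (m + 1)).inv_val
    rw [PowerSeries.invOneSubPow_inv_eq_one_sub_pow] at h2
    push_cast
    calc (1 - PowerSeries.X) * (E : PowerSeries ℤ) = (1 - PowerSeries.X) * (E : PowerSeries ℤ) *
          ((1 - PowerSeries.X) ^ (m+1) * (PowerSeries.invOneSubPow ℤ (m + 1)).val) := by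
            rw [h2, mul_one]
      _ = _ := by ring
  rw [← Polynomial.coeff_coe, h, PowerSeries.coeff_mul,
    Finset.Nat.sum_antidiagonal_eq_sum_range_succ_mk]
  apply Finset.sum_congr rfl
  intro j _
  rw [PowerSeries.invOneSubPow_val_succ_eq_mk_add_choose, PowerSeries.coeff_mk,
    Polynomial.coeff_coe, mul_comm]

lemma final_ineq (m i : ℕ) (g : ℕ → ℤ) (hg : ∀ j, 1 ≤ j → j ≤ i + 1 → g j ≤ 0) :
    ((i : ℤ) + 1) * ∑ j ∈ Finset.range (i + 1 + 1), (((m + (i + 1 - j)).choose m : ℕ) : ℤ) * g j ≤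
      ((m : ℤ) + 1 + i) * ∑ j ∈ Finset.range (i + 1), (((m + (i - j)).choose m : ℕ) : ℤ) * g j := by
  rw [Finset.sum_range_succ, mul_add]
  have h1 : ((i : ℤ) + 1) * ((((m + (i + 1 - (i + 1))).choose m : ℕ) : ℤ) * g (i + 1)) ≤ 0 := by
    have := hg (i + 1) (by omega) le_rfl
    simp
    nlinarith
  have h2 : ((i : ℤ) + 1) * ∑ j ∈ Finset.range (i + 1),
      (((m + (i + 1 - j)).choose m : ℕ) : ℤ) * g j ≤
      ((m : ℤ) + 1 + i) * ∑ j ∈ Finset.range (i + 1), (((m + (i - j)).choose m : ℕ) : ℤ) * g j := by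
    rw [Finset.mul_sum, Finset.mul_sum]
    apply Finset.sum_le_sum
    intro j hj
    rw [Finset.mem_range] at hj
    obtain ⟨k, rfl⟩ : ∃ k, i = j + k := ⟨i - j, by omega⟩
    have e1 : j + k + 1 - j = k + 1 := by omega
    have e2 : j + k - j = k := by omega
    rw [e1, e2]
    have hc : ((k : ℤ) + 1) * ((m + (k + 1)).choose m : ℕ) =
        ((m : ℤ) + k + 1) * ((m + k).choose m : ℕ) := by
      have := Nat.add_one_mul_choose_eq (m + k) k
      have e3 : (m + k).choose k = (m + k).choose m := by
        rw [← Nat.choose_symm (by omega : k ≤ m + k)]; congr 1; omega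
      have e4 : (m + k).succ.choose k.succ = (m + (k + 1)).choose m := by
        rw [← Nat.choose_symm (by omega : k.succ ≤ (m + k).succ)]; congr 1; omega
      rw [e3, e4] at this
      have h : (((m + k).succ : ℕ) : ℤ) * ((m + k).choose m : ℕ) =
        ((m + (k + 1)).choose m : ℕ) * ((k.succ : ℕ) : ℤ) := by exact_mod_cast this
      push_cast at h
      linarith
    set A : ℤ := (((m + (k + 1)).choose m : ℕ) : ℤ)
    set B : ℤ := (((m + k).choose m : ℕ) : ℤ) with hB
    have hB0 : 0 ≤ B := by positivity
    have hjg : (j : ℤ) * g j ≤ 0 := by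
      rcases Nat.eq_zero_or_pos j with h | h
      · simp [h]
      · exact mul_nonpos_of_nonneg_of_nonpos (by positivity) (hg j h (by omega))
    have hk : (0 : ℤ) < (k : ℤ) + 1 := by positivity
    refine le_of_mul_le_mul_left ?_ hk
    push_cast
    have e5 : ((k : ℤ) + 1) * (((j : ℤ) + k + 1) * (A * g j)) =
        ((j : ℤ) + k + 1) * (((m : ℤ) + k + 1) * B) * g j := by rw [← hc]; ring
    rw [e5]
    have e6 : 0 ≤ ((m : ℤ) * B) * (-((j : ℤ) * g j)) :=
      mul_nonneg (by positivity) (by linarith)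
    nlinarith
  linarith

end helpers

/-- If `f([n]) ≥ 2` then for every `1 ≤ i < r_2(P) - 1`,
`[y^{i+1}]X_P - [y^i]X_P ≤ ((f([n])+i-1)/(i+1)) * ([y^i]X_P - [y^{i-1}]X_P)`;
in particular if `[y^i]X_P - [y^{i-1}]X_P ≤ 0` then `[y^{i+1}]X_P - [y^i]X_P ≤ 0`. -/
theorem stmt18 (n : ℕ) (f : Finset (Fin n) → ℕ) (hf : IsPolymatroidRank n f)
    (hrank : 2 ≤ f Finset.univ) (i : ℕ) (h1 : 1 ≤ i) (hi : i < rk n f 2 - 1) :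
    (((exteriorPoly n f).coeff (i + 1) : ℚ) - ((exteriorPoly n f).coeff i : ℚ) ≤
      (((f Finset.univ + i - 1 : ℕ) : ℚ) / ((i + 1 : ℕ) : ℚ)) *
        (((exteriorPoly n f).coeff i : ℚ) - ((exteriorPoly n f).coeff (i - 1) : ℚ))) ∧
    ((exteriorPoly n f).coeff i - (exteriorPoly n f).coeff (i - 1) ≤ 0 →
      (exteriorPoly n f).coeff (i + 1) - (exteriorPoly n f).coeff i ≤ 0) := by
  obtain ⟨m, hm⟩ : ∃ m, f Finset.univ = m + 2 := ⟨f Finset.univ - 2, by omega⟩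
  obtain ⟨l, rfl⟩ : ∃ l, i = l + 1 := ⟨i - 1, by omega⟩
  set E := exteriorPoly n f with hE
  have hd : ∀ k, ((1 - X) * E).coeff (k + 1) = E.coeff (k + 1) - E.coeff k := by
    intro k
    rw [sub_mul, one_mul, Polynomial.coeff_sub, Polynomial.coeff_X_mul]
  have key := final_ineq m (l + 1) (fun j => ((1 - X) ^ (m + 2) * E).coeff j) (by
    intro j hj1 hj2
    have := coeff_G hf j hj1 (by omega)
    rw [hm] at this
    exact this)
  rw [← coeff_diff E m (l + 1 + 1), ← coeff_diff E m (l + 1), hd, hd] at key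
  have e : l + 1 - 1 = l := by omega
  rw [e]
  push_cast at key
  constructor
  · have e2 : f Finset.univ + (l + 1) - 1 = m + 2 + l := by omega
    rw [e2, div_mul_eq_mul_div, le_div_iff₀ (by positivity)]
    have key' : (((l : ℤ) + 1 + 1) * (E.coeff (l + 1 + 1) - E.coeff (l + 1)) : ℚ) ≤
      ((m : ℤ) + 1 + (l + 1)) * (E.coeff (l + 1) - E.coeff l) := by exact_mod_cast key
    push_cast at key' ⊢
    linarith
  · intro h
    have h2 : ((m : ℤ) + 1 + (l + 1)) * (E.coeff (l + 1) - E.coeff l) ≤ 0 :=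
      mul_nonpos_of_nonneg_of_nonpos (by positivity) h
    by_contra hcon
    push Not at hcon
    have : 0 < ((l : ℤ) + 1 + 1) * (E.coeff (l + 1 + 1) - E.coeff (l + 1)) :=
      mul_pos (by positivity) hcon
    linarith
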